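/- (Maehara's lemma for first-order logic with identity) In the calculus G= (G extended with the rules Ref and Repl for identity), every partition Γ₁;Γ₂⇒Δ₁;Δ₂ of a derivable sequent Γ⇒Δ has a split-interpolant: there exists a formula C such that Γ₁⇒Δ₁,C and C,Γ₂⇒Δ₂ are derivable in G= and L(C) ⊆ L(Γ₁,Δ₁) ∩ L(Γ₂,Δ₂). -/

import Mathlib

/-- Terms: variables or individual constants (no function symbols). -/
inductive Tm where
  | var : ℕ → Tm
  | const : ℕ → Tm
deriving DecidableEq

/-- First-order formulas over a language with denumerably many predicates,
a logical identity predicate, ⊥, ⊤, ∧, ∨, →, ∀, ∃. -/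
inductive Fm where
  | rel : ℕ → List Tm → Fm
  | eq : Tm → Tm → Fm
  | bot : Fm
  | top : Fm
  | and : Fm → Fm → Fm
  | or : Fm → Fm → Fm
  | imp : Fm → Fm → Fm
  | all : ℕ → Fm → Fm
  | ex : ℕ → Fm → Fm
deriving DecidableEq

def Fm.isAtom : Fm → Prop
  | .rel _ _ => True
  | .eq _ _ => True
  | .bot => True
  | .top => True
  | _ => False

/-- Ter(A): the free variables and individual constants of A, as terms. -/
def Fm.ter : Fm → Finset Tm
  | .rel _ ts => ts.toFinset
  | .eq a b => {a, b}
  | .bot => ∅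
  | .top => ∅
  | .and A B => A.ter ∪ B.ter
  | .or A B => A.ter ∪ B.ter
  | .imp A B => A.ter ∪ B.ter
  | .all x A => A.ter.erase (Tm.var x)
  | .ex x A => A.ter.erase (Tm.var x)

/-- Rel(A): the non-logical predicate symbols of A (identity, ⊥, ⊤ are logical). -/
def Fm.rels : Fm → Finset ℕ
  | .rel r _ => {r}
  | .eq _ _ => ∅
  | .bot => ∅
  | .top => ∅
  | .and A B => A.rels ∪ B.rels
  | .or A B => A.rels ∪ B.rels
  | .imp A B => A.rels ∪ B.rels
  | .all _ A => A.rels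
  | .ex _ A => A.rels

def Tm.consts : Tm → Finset ℕ
  | .var _ => ∅
  | .const c => {c}

/-- The individual constants occurring in A. -/
def Fm.consts : Fm → Finset ℕ
  | .rel _ ts => ts.foldr (fun t s => t.consts ∪ s) ∅
  | .eq a b => a.consts ∪ b.consts
  | .bot => ∅
  | .top => ∅
  | .and A B => A.consts ∪ B.consts
  | .or A B => A.consts ∪ B.consts
  | .imp A B => A.consts ∪ B.consts
  | .all _ A => A.consts
  | .ex _ A => A.consts

/-- L(A) = Ter(A) ∪ Rel(A). -/
def Fm.lang (A : Fm) : Finset (Tm ⊕ ℕ) :=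
  A.ter.image Sum.inl ∪ A.rels.image Sum.inr

/-- Ter of a multiset of formulas. -/
def terM (Γ : Multiset Fm) : Finset Tm := (Γ.map Fm.ter).sup

/-- L of a multiset of formulas. -/
def langM (Γ : Multiset Fm) : Finset (Tm ⊕ ℕ) := (Γ.map Fm.lang).sup

/-- s[t/u]: substitute the term t for the term u (a variable or a constant) in s. -/
def Tm.subst (s u t : Tm) : Tm := if s = u then t else s

/-- A[t/u]: substitute the term t for the term u in A (bound occurrences
of a variable u are not replaced). -/
def Fm.subst : Fm → Tm → Tm → Fm
  | .rel r ts, u, t => .rel r (ts.map (fun s => s.subst u t))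
  | .eq a b, u, t => .eq (a.subst u t) (b.subst u t)
  | .bot, _, _ => .bot
  | .top, _, _ => .top
  | .and A B, u, t => .and (A.subst u t) (B.subst u t)
  | .or A B, u, t => .or (A.subst u t) (B.subst u t)
  | .imp A B, u, t => .imp (A.subst u t) (B.subst u t)
  | .all x A, u, t => if u = Tm.var x then .all x A else .all x (A.subst u t)
  | .ex x A, u, t => if u = Tm.var x then .ex x A else .ex x (A.subst u t)

/-- t is free for u in A (no free occurrence of u is in the scope of a
quantifier binding the variable t, if t is a variable). -/
def Fm.freeFor (t u : Tm) : Fm → Prop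
  | .and A B => A.freeFor t u ∧ B.freeFor t u
  | .or A B => A.freeFor t u ∧ B.freeFor t u
  | .imp A B => A.freeFor t u ∧ B.freeFor t u
  | .all x A => u ∉ (Fm.all x A).ter ∨ (t ≠ Tm.var x ∧ A.freeFor t u)
  | .ex x A => u ∉ (Fm.ex x A).ter ∨ (t ≠ Tm.var x ∧ A.freeFor t u)
  | _ => True

/-- Simultaneous substitution of terms for variables (used on atoms). -/
def Tm.applyσ (σ : ℕ → Tm) : Tm → Tm
  | .var x => σ x
  | .const c => .const c

def Fm.applyσ (σ : ℕ → Tm) : Fm → Fm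
  | .rel r ts => .rel r (ts.map (Tm.applyσ σ))
  | .eq a b => .eq (a.applyσ σ) (b.applyσ σ)
  | .bot => .bot
  | .top => .top
  | .and A B => .and (A.applyσ σ) (B.applyσ σ)
  | .or A B => .or (A.applyσ σ) (B.applyσ σ)
  | .imp A B => .imp (A.applyσ σ) (B.applyσ σ)
  | .all x A => .all x (A.applyσ σ)
  | .ex x A => .ex x (A.applyσ σ)

/-- A geometric rule, given by its principal atoms P₁,…,Pₙ (with free
variables x̄) and, for each of its m ≥ 1 premises, an atom Qᵢ together with
its eigenvariable yᵢ. It corresponds to the geometric axiom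
∀x̄(P₁∧…∧Pₙ → ∃y₁Q₁ ∨ … ∨ ∃yₘQₘ). -/
structure GeomRule where
  Ps : List Fm
  QYs : List (Fm × ℕ)
  QYs_ne : QYs ≠ []
  atomP : ∀ P ∈ Ps, P.isAtom
  atomQ : ∀ q ∈ QYs, q.1.isAtom

/-- Rel of a list of formulas. -/
def relsL (L : List Fm) : Finset ℕ := L.foldr (fun A s => A.rels ∪ s) ∅

/-- A singular geometric rule: no individual constants occur in it, and (⋆):
at most one non-logical predicate occurs among the Qᵢ's and Pⱼ's, and every
non-logical predicate of the Qᵢ's occurs among the Pⱼ's. -/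
def GeomRule.Singular (R : GeomRule) : Prop :=
  (∀ P ∈ R.Ps, P.consts = ∅) ∧ (∀ q ∈ R.QYs, q.1.consts = ∅) ∧
  (relsL R.Ps ∪ relsL (R.QYs.map Prod.fst)).card ≤ 1 ∧
  relsL (R.QYs.map Prod.fst) ⊆ relsL R.Ps

/-- The instantiated principal atoms P₁[σ],…,Pₙ[σ] of a geometric rule. -/
def GeomRule.inst (R : GeomRule) (σ : ℕ → Tm) : Multiset Fm :=
  ((R.Ps.map (Fm.applyσ σ) : List Fm) : Multiset Fm)

/-- `DerG Rules n Γ Δ`: the sequent Γ⇒Δ has a derivation of height at most n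
in the calculus G3c extended with the geometric rules in `Rules`
(the plain calculus G is `DerG ∅`). -/
inductive DerG (Rules : Set GeomRule) : ℕ → Multiset Fm → Multiset Fm → Prop where
  | ax {n : ℕ} {P : Fm} {Γ Δ : Multiset Fm} (h : P.isAtom) :
      DerG Rules n (P ::ₘ Γ) (P ::ₘ Δ)
  | botL {n : ℕ} {Γ Δ : Multiset Fm} : DerG Rules n (Fm.bot ::ₘ Γ) Δ
  | topR {n : ℕ} {Γ Δ : Multiset Fm} : DerG Rules n Γ (Fm.top ::ₘ Δ)
  | andL {n : ℕ} {A B : Fm} {Γ Δ : Multiset Fm} :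
      DerG Rules n (A ::ₘ B ::ₘ Γ) Δ → DerG Rules (n + 1) (Fm.and A B ::ₘ Γ) Δ
  | andR {n : ℕ} {A B : Fm} {Γ Δ : Multiset Fm} :
      DerG Rules n Γ (A ::ₘ Δ) → DerG Rules n Γ (B ::ₘ Δ) →
      DerG Rules (n + 1) Γ (Fm.and A B ::ₘ Δ)
  | orL {n : ℕ} {A B : Fm} {Γ Δ : Multiset Fm} :
      DerG Rules n (A ::ₘ Γ) Δ → DerG Rules n (B ::ₘ Γ) Δ →
      DerG Rules (n + 1) (Fm.or A B ::ₘ Γ) Δ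
  | orR {n : ℕ} {A B : Fm} {Γ Δ : Multiset Fm} :
      DerG Rules n Γ (A ::ₘ B ::ₘ Δ) → DerG Rules (n + 1) Γ (Fm.or A B ::ₘ Δ)
  | impL {n : ℕ} {A B : Fm} {Γ Δ : Multiset Fm} :
      DerG Rules n Γ (A ::ₘ Δ) → DerG Rules n (B ::ₘ Γ) Δ →
      DerG Rules (n + 1) (Fm.imp A B ::ₘ Γ) Δ
  | impR {n : ℕ} {A B : Fm} {Γ Δ : Multiset Fm} :
      DerG Rules n (A ::ₘ Γ) (B ::ₘ Δ) → DerG Rules (n + 1) Γ (Fm.imp A B ::ₘ Δ)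
  | allL {n : ℕ} {x : ℕ} {A : Fm} {t : Tm} {Γ Δ : Multiset Fm}
      (hfree : A.freeFor t (Tm.var x)) :
      DerG Rules n (A.subst (Tm.var x) t ::ₘ Fm.all x A ::ₘ Γ) Δ →
      DerG Rules (n + 1) (Fm.all x A ::ₘ Γ) Δ
  | allR {n : ℕ} {x y : ℕ} {A : Fm} {Γ Δ : Multiset Fm}
      (hfree : A.freeFor (Tm.var y) (Tm.var x))
      (hy : Tm.var y ∉ terM Γ ∪ terM Δ ∪ (Fm.all x A).ter) :
      DerG Rules n Γ (A.subst (Tm.var x) (Tm.var y) ::ₘ Δ) →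
      DerG Rules (n + 1) Γ (Fm.all x A ::ₘ Δ)
  | exL {n : ℕ} {x y : ℕ} {A : Fm} {Γ Δ : Multiset Fm}
      (hfree : A.freeFor (Tm.var y) (Tm.var x))
      (hy : Tm.var y ∉ terM Γ ∪ terM Δ ∪ (Fm.ex x A).ter) :
      DerG Rules n (A.subst (Tm.var x) (Tm.var y) ::ₘ Γ) Δ →
      DerG Rules (n + 1) (Fm.ex x A ::ₘ Γ) Δ
  | exR {n : ℕ} {x : ℕ} {A : Fm} {t : Tm} {Γ Δ : Multiset Fm}
      (hfree : A.freeFor t (Tm.var x)) :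
      DerG Rules n Γ (Fm.ex x A ::ₘ A.subst (Tm.var x) t ::ₘ Δ) →
      DerG Rules (n + 1) Γ (Fm.ex x A ::ₘ Δ)
  | geom {n : ℕ} {R : GeomRule} {σ : ℕ → Tm} {Γ Δ : Multiset Fm} (hR : R ∈ Rules)
      (hfresh : ∀ q ∈ R.QYs, ∃ z : ℕ, σ q.2 = Tm.var z ∧
          Tm.var z ∉ terM (R.inst σ + Γ) ∪ terM Δ)
      (hprem : ∀ q ∈ R.QYs, DerG Rules n (Fm.applyσ σ q.1 ::ₘ (R.inst σ + Γ)) Δ) :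
      DerG Rules (n + 1) (R.inst σ + Γ) Δ

/-- Γ⇒Δ is derivable in G + Rules. -/
def Derivable (Rules : Set GeomRule) (Γ Δ : Multiset Fm) : Prop :=
  ∃ n, DerG Rules n Γ Δ

/-- C is a split-interpolant of the partition Γ₁;Γ₂⇒Δ₁;Δ₂ in G + Rules. -/
def SplitInterpolant (Rules : Set GeomRule) (Γ₁ Γ₂ Δ₁ Δ₂ : Multiset Fm) (C : Fm) : Prop :=
  Derivable Rules Γ₁ (C ::ₘ Δ₁) ∧ Derivable Rules (C ::ₘ Γ₂) Δ₂ ∧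
  C.lang ⊆ langM (Γ₁ + Δ₁) ∩ langM (Γ₂ + Δ₂)
/-- Disjunction C₁ ∨ … ∨ Cₘ of a list of formulas. -/
def disj : List Fm → Fm
  | [] => Fm.bot
  | [C] => C
  | C :: L => Fm.or C (disj L)

/-- Conjunction C₁ ∧ … ∧ Cₘ of a list of formulas. -/
def conj : List Fm → Fm
  | [] => Fm.top
  | [C] => C
  | C :: L => Fm.and C (conj L)

/-- A[z̄/t̄]: successively substitute the variable zᵢ for the term tᵢ. -/
def Fm.substPairs : Fm → List (Tm × ℕ) → Fm
  | A, [] => A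
  | A, (t, z) :: L => (A.subst t (Tm.var z)).substPairs L

/-- ∀z̄ A. -/
def foralls (zs : List ℕ) (A : Fm) : Fm := zs.foldr Fm.all A

/-- ∃z̄ A. -/
def exs (zs : List ℕ) (A : Fm) : Fm := zs.foldr Fm.ex A
/-- `DerE Γ Δ`: the sequent Γ⇒Δ is derivable in G= , i.e. G3c extended with
the rules Ref and Repl for identity. -/
inductive DerE : Multiset Fm → Multiset Fm → Prop where
  | ax {P : Fm} {Γ Δ : Multiset Fm} (h : P.isAtom) : DerE (P ::ₘ Γ) (P ::ₘ Δ)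
  | botL {Γ Δ : Multiset Fm} : DerE (Fm.bot ::ₘ Γ) Δ
  | topR {Γ Δ : Multiset Fm} : DerE Γ (Fm.top ::ₘ Δ)
  | andL {A B : Fm} {Γ Δ : Multiset Fm} :
      DerE (A ::ₘ B ::ₘ Γ) Δ → DerE (Fm.and A B ::ₘ Γ) Δ
  | andR {A B : Fm} {Γ Δ : Multiset Fm} :
      DerE Γ (A ::ₘ Δ) → DerE Γ (B ::ₘ Δ) → DerE Γ (Fm.and A B ::ₘ Δ)
  | orL {A B : Fm} {Γ Δ : Multiset Fm} :
      DerE (A ::ₘ Γ) Δ → DerE (B ::ₘ Γ) Δ → DerE (Fm.or A B ::ₘ Γ) Δ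
  | orR {A B : Fm} {Γ Δ : Multiset Fm} :
      DerE Γ (A ::ₘ B ::ₘ Δ) → DerE Γ (Fm.or A B ::ₘ Δ)
  | impL {A B : Fm} {Γ Δ : Multiset Fm} :
      DerE Γ (A ::ₘ Δ) → DerE (B ::ₘ Γ) Δ → DerE (Fm.imp A B ::ₘ Γ) Δ
  | impR {A B : Fm} {Γ Δ : Multiset Fm} :
      DerE (A ::ₘ Γ) (B ::ₘ Δ) → DerE Γ (Fm.imp A B ::ₘ Δ)
  | allL {x : ℕ} {A : Fm} {t : Tm} {Γ Δ : Multiset Fm}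
      (hfree : A.freeFor t (Tm.var x)) :
      DerE (A.subst (Tm.var x) t ::ₘ Fm.all x A ::ₘ Γ) Δ → DerE (Fm.all x A ::ₘ Γ) Δ
  | allR {x y : ℕ} {A : Fm} {Γ Δ : Multiset Fm}
      (hfree : A.freeFor (Tm.var y) (Tm.var x))
      (hy : Tm.var y ∉ terM Γ ∪ terM Δ ∪ (Fm.all x A).ter) :
      DerE Γ (A.subst (Tm.var x) (Tm.var y) ::ₘ Δ) → DerE Γ (Fm.all x A ::ₘ Δ)
  | exL {x y : ℕ} {A : Fm} {Γ Δ : Multiset Fm}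
      (hfree : A.freeFor (Tm.var y) (Tm.var x))
      (hy : Tm.var y ∉ terM Γ ∪ terM Δ ∪ (Fm.ex x A).ter) :
      DerE (A.subst (Tm.var x) (Tm.var y) ::ₘ Γ) Δ → DerE (Fm.ex x A ::ₘ Γ) Δ
  | exR {x : ℕ} {A : Fm} {t : Tm} {Γ Δ : Multiset Fm}
      (hfree : A.freeFor t (Tm.var x)) :
      DerE Γ (Fm.ex x A ::ₘ A.subst (Tm.var x) t ::ₘ Δ) → DerE Γ (Fm.ex x A ::ₘ Δ)
  | refl {s : Tm} {Γ Δ : Multiset Fm} :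
      DerE (Fm.eq s s ::ₘ Γ) Δ → DerE Γ Δ
  | repl {P : Fm} {x : ℕ} {s t : Tm} {Γ Δ : Multiset Fm} (hP : P.isAtom) :
      DerE (P.subst (Tm.var x) t ::ₘ Fm.eq s t ::ₘ P.subst (Tm.var x) s ::ₘ Γ) Δ →
      DerE (Fm.eq s t ::ₘ P.subst (Tm.var x) s ::ₘ Γ) Δ

/-- C is a split-interpolant of the partition Γ₁;Γ₂⇒Δ₁;Δ₂ in G=. -/
def SplitInterpolantE (Γ₁ Γ₂ Δ₁ Δ₂ : Multiset Fm) (C : Fm) : Prop :=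
  DerE Γ₁ (C ::ₘ Δ₁) ∧ DerE (C ::ₘ Γ₂) Δ₂ ∧
  C.lang ⊆ langM (Γ₁ + Δ₁) ∩ langM (Γ₂ + Δ₂)
namespace MI

def bv : Fm → Finset ℕ
  | .rel _ _ => ∅
  | .eq _ _ => ∅
  | .bot => ∅
  | .top => ∅
  | .and A B => bv A ∪ bv B
  | .or A B => bv A ∪ bv B
  | .imp A B => bv A ∪ bv B
  | .all x A => insert x (bv A)
  | .ex x A => insert x (bv A)

abbrev upd (f : Tm → Tm) (u t : Tm) : Tm → Tm := Function.update f u t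

def ren : Fm → (Tm → Tm) → Fm
  | .rel r ts, f => .rel r (ts.map f)
  | .eq a b, f => .eq (f a) (f b)
  | .bot, _ => .bot
  | .top, _ => .top
  | .and A B, f => .and (ren A f) (ren B f)
  | .or A B, f => .or (ren A f) (ren B f)
  | .imp A B, f => .imp (ren A f) (ren B f)
  | .all x A, f => .all x (ren A (upd f (.var x) (.var x)))
  | .ex x A, f => .ex x (ren A (upd f (.var x) (.var x)))

def ok : Fm → (Tm → Tm) → Prop
  | .and A B, f => ok A f ∧ ok B f
  | .or A B, f => ok A f ∧ ok B f
  | .imp A B, f => ok A f ∧ ok B f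
  | .all x A, f => (∀ u ∈ A.ter, u ≠ .var x → f u ≠ .var x) ∧ ok A (upd f (.var x) (.var x))
  | .ex x A, f => (∀ u ∈ A.ter, u ≠ .var x → f u ≠ .var x) ∧ ok A (upd f (.var x) (.var x))
  | _, _ => True

theorem ren_congr (A : Fm) : ∀ f g : Tm → Tm, (∀ u ∈ A.ter, f u = g u) → ren A f = ren A g := by
  induction A with
  | rel r ts => intro f g h; simp [Fm.ter] at h; simpa [ren] using h
  | eq a b => intro f g h; simp [Fm.ter] at h; simpa [ren] using h
  | bot => intros; rfl
  | top => intros; rfl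
  | and A B ha hb | or A B ha hb | imp A B ha hb =>
    intro f g h; simp only [Fm.ter, Finset.mem_union] at h
    simp only [ren]; rw [ha f g (by grind), hb f g (by grind)]
  | all x A ha | ex x A ha =>
    intro f g h; simp only [Fm.ter, Finset.mem_erase] at h
    simp only [ren]; rw [ha _ (upd g (.var x) (.var x))]
    intro u hu
    by_cases hx : u = .var x
    · subst hx; simp [upd]
    · simp [upd, hx, h u ⟨hx, hu⟩]

theorem upd_id (u : Tm) : upd id u u = id := by simp [upd]

theorem ren_id (A : Fm) : ren A id = A := by
  induction A with
  | rel r ts => simp [ren]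
  | eq a b => simp [ren]
  | bot => rfl
  | top => rfl
  | and A B ha hb | or A B ha hb | imp A B ha hb => simp [ren, ha, hb]
  | all x A ha | ex x A ha => simp only [ren]; rw [upd_id, ha]

theorem tsubst (s u t : Tm) : s.subst u t = upd id u t s := by
  simp [Tm.subst, upd, Function.update_apply]

theorem subst_eq (A : Fm) (u t : Tm) : A.subst u t = ren A (upd id u t) := by
  induction A with
  | rel r ts => simp [ren, Fm.subst, tsubst]
  | eq a b => simp [ren, Fm.subst, tsubst]
  | bot => rfl
  | top => rfl
  | and A B ha hb | or A B ha hb | imp A B ha hb => simp [ren, Fm.subst, ha, hb]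
  | all x A ha | ex x A ha =>
    simp only [ren, Fm.subst]
    by_cases h : u = .var x
    · subst h; simp only [if_true, upd, Function.update_idem]
      rw [← upd, upd_id, ren_id]
    · simp only [h, if_false, ha]
      have : upd (upd id u t) (.var x) (.var x) = upd id u t := by
        simp only [upd]; rw [Function.update_comm h]
        show Function.update (upd id _ _) _ _ = _
        rw [upd_id]
      rw [this]

theorem ren_ren (A : Fm) : ∀ f g : Tm → Tm, ok A f → ren (ren A f) g = ren A (g ∘ f) := by
  induction A with
  | rel r ts => intro f g h; simp [ren]
  | eq a b => intro f g h; simp [ren]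
  | bot => intros; rfl
  | top => intros; rfl
  | and A B ha hb | or A B ha hb | imp A B ha hb =>
    intro f g h; simp [ren, ha f g h.1, hb f g h.2]
  | all x A ha | ex x A ha =>
    intro f g h
    simp only [ren]; rw [ha _ _ h.2]
    congr 1
    apply ren_congr
    intro u hu
    by_cases hx : u = .var x
    · subst hx; simp [upd]
    · have := h.1 u hu hx
      simp [upd, hx, this]

theorem ter_ren (A : Fm) : ∀ f, ∀ u ∈ (ren A f).ter, ∃ v ∈ A.ter, f v = u := by
  induction A with
  | rel r ts => intro f u; simp [ren, Fm.ter]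
  | eq a b => intro f u; simp [ren, Fm.ter]; grind
  | bot => intro f u; simp [ren, Fm.ter]
  | top => intro f u; simp [ren, Fm.ter]
  | and A B ha hb | or A B ha hb | imp A B ha hb =>
    intro f u; simp only [ren, Fm.ter, Finset.mem_union]; grind
  | all x A ha | ex x A ha =>
    intro f u; simp only [ren, Fm.ter, Finset.mem_erase]
    rintro ⟨h1, h2⟩
    obtain ⟨v, hv, e⟩ := ha _ _ h2
    by_cases hx : v = .var x
    · subst hx; simp [upd] at e; exact absurd e.symm h1
    · simp [upd, hx] at e; exact ⟨v, ⟨hx, hv⟩, e⟩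

theorem rels_ren (A : Fm) : ∀ f, (ren A f).rels = A.rels := by
  induction A with
  | and A B ha hb | or A B ha hb | imp A B ha hb => intro f; simp [ren, Fm.rels, ha, hb]
  | all x A ha | ex x A ha => intro f; simp [ren, Fm.rels, ha]
  | _ => intro f; simp [ren, Fm.rels]

theorem bv_ren (A : Fm) : ∀ f, bv (ren A f) = bv A := by
  induction A with
  | and A B ha hb | or A B ha hb | imp A B ha hb => intro f; simp [ren, bv, ha, hb]
  | all x A ha | ex x A ha => intro f; simp [ren, bv, ha]
  | _ => intro f; simp [ren, bv]

/-- f only moves terms to things that are not variables in S -/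
def good (S : Finset ℕ) (f : Tm → Tm) : Prop := ∀ u, ∀ x ∈ S, f u = .var x → u = .var x

theorem good.mono {S T : Finset ℕ} {f} (h : good T f) (hs : S ⊆ T) : good S f :=
  fun u x hx e => h u x (hs hx) e

theorem good.upd {S : Finset ℕ} {f} (h : good S f) (x : ℕ) : good S (upd f (.var x) (.var x)) := by
  intro u y hy e
  by_cases hx : u = .var x
  · subst hx; simpa [MI.upd] using e
  · simp [MI.upd, hx] at e; exact h u y hy e

theorem good_fresh {S : Finset ℕ} {f} (h : good S f) (t : Tm) (z : ℕ) (hz : z ∉ S) :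
    good S (upd f t (.var z)) := by
  intro u y hy e
  by_cases hx : u = t
  · subst hx; simp [MI.upd] at e; subst e; exact absurd hy hz
  · simp [MI.upd, hx] at e; exact h u y hy e

theorem good_id (S : Finset ℕ) : good S id := fun _ _ _ e => e

theorem ok_good (A : Fm) : ∀ f, good (bv A) f → ok A f := by
  induction A with
  | and A B ha hb | or A B ha hb | imp A B ha hb =>
    intro f h
    exact ⟨ha f (h.mono (by simp [bv])), hb f (h.mono (by simp [bv]))⟩
  | all x A ha | ex x A ha =>
    intro f h
    refine ⟨fun u _ hx e => hx (h u x (by simp [bv]) e), ha _ ((h.mono (by simp [bv])).upd x)⟩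
  | _ => intros; trivial

theorem ok_id (A : Fm) : ok A id := ok_good A id (good_id _)

theorem ok_congr (A : Fm) : ∀ f g : Tm → Tm, (∀ u ∈ A.ter, f u = g u) → ok A f → ok A g := by
  induction A with
  | and A B ha hb | or A B ha hb | imp A B ha hb =>
    intro f g h o
    simp only [Fm.ter, Finset.mem_union] at h
    exact ⟨ha f g (by grind) o.1, hb f g (by grind) o.2⟩
  | all x A ha | ex x A ha =>
    intro f g h o
    simp only [Fm.ter, Finset.mem_erase] at h
    refine ⟨fun u hu hx => by rw [← h u ⟨hx, hu⟩]; exact o.1 u hu hx, ha _ _ ?_ o.2⟩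
    intro u hu
    by_cases hx : u = .var x
    · subst hx; simp [upd]
    · simp [upd, hx, h u ⟨hx, hu⟩]
  | _ => intros; trivial

theorem ok_freeFor (A : Fm) (t u : Tm) : A.freeFor t u → ok A (upd id u t) := by
  induction A with
  | and A B ha hb | or A B ha hb | imp A B ha hb => intro h; exact ⟨ha h.1, hb h.2⟩
  | all x A ha | ex x A ha =>
    intro h
    rcases h with h | ⟨h1, h2⟩
    · refine ok_congr _ id _ ?_ (ok_id _)
      intro v hv
      have : v ≠ u := by rintro rfl; exact h hv
      simp [upd, this]
    · refine ⟨fun v hv hx => ?_, ?_⟩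
      · by_cases e : v = u
        · subst e; simpa [upd] using h1
        · simpa [upd, e] using hx
      · by_cases e : u = .var x
        · subst e
          simp only [upd, Function.update_idem]
          rw [← upd, upd_id]; exact ok_id _
        · simp only [upd]; rw [Function.update_comm e]
          show ok A (Function.update (upd id _ _) _ _)
          rw [upd_id]; exact ha h2
  | _ => intros; trivial

theorem freeFor_bv (A : Fm) (t u : Tm) : (∀ x, t = .var x → x ∉ bv A) → A.freeFor t u := by
  induction A with
  | and A B ha hb | or A B ha hb | imp A B ha hb =>
    intro h; simp only [bv, Finset.mem_union] at h
    exact ⟨ha (by grind), hb (by grind)⟩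
  | all x A ha | ex x A ha =>
    intro h; simp only [bv, Finset.mem_insert] at h
    exact Or.inr ⟨by grind, ha (by grind)⟩
  | _ => intros; trivial

theorem freeFor_ren (A : Fm) (t t' : Tm) (x : ℕ) : ∀ f, good (insert x (bv A)) f →
    (∀ w ∈ bv A, t' = .var w → t = .var w) → f (.var x) = .var x →
    A.freeFor t (.var x) → (ren A f).freeFor t' (.var x) := by
  induction A with
  | and A B ha hb | or A B ha hb | imp A B ha hb =>
    intro f g ht e h
    exact ⟨ha f (g.mono (by intro a; simp [bv]; tauto)) (fun v hv => ht v (by simp [bv, hv])) e h.1,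
      hb f (g.mono (by intro a; simp [bv]; tauto)) (fun v hv => ht v (by simp [bv, hv])) e h.2⟩
  | all w A ha =>
    intro f g ht e h
    by_cases hx : (Tm.var x) ∈ (Fm.all w A).ter
    · rcases h with h | ⟨h1, h2⟩
      · exact absurd hx h
      right
      have hw : (Tm.var x) ≠ Tm.var w := by
        simp only [Fm.ter, Finset.mem_erase] at hx; exact hx.1
      refine ⟨fun h => h1 (ht w (by simp [bv]) h), ?_⟩
      exact ha (upd f (.var w) (.var w)) ((g.mono (by intro a; simp [bv]; tauto)).upd w)
        (fun v hv => ht v (by simp [bv, hv])) (by simp [upd, hw, e]) h2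
    · left
      intro h'
      obtain ⟨v, hv, e'⟩ := ter_ren (Fm.all w A) f _ h'
      have := g v x (by simp) e'
      subst this; exact hx hv
  | ex w A ha =>
    intro f g ht e h
    by_cases hx : (Tm.var x) ∈ (Fm.ex w A).ter
    · rcases h with h | ⟨h1, h2⟩
      · exact absurd hx h
      right
      have hw : (Tm.var x) ≠ Tm.var w := by
        simp only [Fm.ter, Finset.mem_erase] at hx; exact hx.1
      refine ⟨fun h => h1 (ht w (by simp [bv]) h), ?_⟩
      exact ha (upd f (.var w) (.var w)) ((g.mono (by intro a; simp [bv]; tauto)).upd w)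
        (fun v hv => ht v (by simp [bv, hv])) (by simp [upd, hw, e]) h2
    · left
      intro h'
      obtain ⟨v, hv, e'⟩ := ter_ren (Fm.ex w A) f _ h'
      have := g v x (by simp) e'
      subst this; exact hx hv
  | _ => intros; trivial

theorem mem_terM {u : Tm} {Γ : Multiset Fm} : u ∈ terM Γ ↔ ∃ A ∈ Γ, u ∈ A.ter := by
  unfold terM
  induction Γ using Multiset.induction with
  | empty => simp
  | cons a s ih => simp [ih]

theorem terM_cons (A : Fm) (Γ : Multiset Fm) : terM (A ::ₘ Γ) = A.ter ∪ terM Γ := by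
  simp [terM]

theorem terM_add (Γ Δ : Multiset Fm) : terM (Γ + Δ) = terM Γ ∪ terM Δ := by
  simp [terM]

theorem map_congr' {Γ : Multiset Fm} {f g : Tm → Tm} (h : ∀ u ∈ terM Γ, f u = g u) :
    Γ.map (ren · f) = Γ.map (ren · g) := by
  apply Multiset.map_congr rfl
  intro A hA
  exact ren_congr A f g fun u hu => h u (mem_terM.2 ⟨A, hA, hu⟩)

theorem isAtom_ren {P : Fm} (h : P.isAtom) (f) : (ren P f).isAtom := by
  cases P <;> simp_all [Fm.isAtom, ren]

theorem ok_atom {P : Fm} (h : P.isAtom) (f) : ok P f := by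
  cases P <;> simp_all [Fm.isAtom, ok]

theorem exists_fresh (S : Finset ℕ) (T : Finset Tm) : ∃ z : ℕ, z ∉ S ∧ Tm.var z ∉ T := by
  have hinj : Function.Injective Tm.var := fun a b h => by cases h; rfl
  obtain ⟨z, hz⟩ := Infinite.exists_notMem_finset (S ∪ T.preimage Tm.var hinj.injOn)
  simp at hz
  exact ⟨z, hz.1, hz.2⟩

/-- instance of a quantifier under renaming -/
theorem inst_ren {A : Fm} {x : ℕ} {t : Tm} {f : Tm → Tm} (g : good (insert x (bv A)) f)
    (h : A.freeFor t (.var x)) :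
    ren (A.subst (.var x) t) f =
      (ren A (upd f (.var x) (.var x))).subst (.var x) (f t) := by
  rw [subst_eq, subst_eq, ren_ren _ _ _ (ok_freeFor _ _ _ h),
    ren_ren _ _ _ (ok_good _ _ ((g.mono (by simp)).upd x))]
  apply ren_congr
  intro u hu
  by_cases hx : u = .var x
  · subst hx; simp [upd]
  · have : f u ≠ .var x := fun e => hx (g u x (by simp) e)
    simp [upd, hx, this]

theorem inst_free {A : Fm} {x : ℕ} {t : Tm} {f : Tm → Tm} (g : good (insert x (bv A)) f)
    (h : A.freeFor t (.var x)) :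
    (ren A (upd f (.var x) (.var x))).freeFor (f t) (.var x) := by
  exact freeFor_ren A t (f t) x _ (g.upd x) (fun w hw e => g t w (by simp [hw]) e) (by simp [upd]) h

end MI
namespace MI

theorem eigen_ren {A : Fm} {x y z : ℕ} {f : Tm → Tm} (g : good (insert x (bv A)) f)
    (hz : z ∉ insert x (bv A)) (hy : Tm.var y ∉ (Fm.all x A).ter)
    (h : A.freeFor (.var y) (.var x)) :
    ren (A.subst (.var x) (.var y)) (upd f (.var y) (.var z)) =
      (ren A (upd f (.var x) (.var x))).subst (.var x) (.var z) := by
  have e := inst_ren (t := .var y) (good_fresh g (.var y) z hz) h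
  rw [e]
  have e2 : upd f (.var y) (.var z) (.var y) = .var z := by simp [upd]
  rw [e2]
  congr 1
  apply ren_congr
  intro u hu
  by_cases hx : u = .var x
  · subst hx; simp [upd]
  · have : u ≠ .var y := by
      rintro rfl; exact hy (by simp only [Fm.ter, Finset.mem_erase]; exact ⟨hx, hu⟩)
    simp [upd, hx, this]

theorem upd_fresh_map {Γ : Multiset Fm} {f : Tm → Tm} {y z : Tm} (hy : y ∉ terM Γ) :
    Γ.map (ren · (upd f y z)) = Γ.map (ren · f) := by
  apply map_congr'
  intro u hu
  have : u ≠ y := by rintro rfl; exact hy hu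
  simp [upd, this]

theorem struct {Γ Δ : Multiset Fm} (h : DerE Γ Δ) : ∃ S : Finset ℕ, ∀ f, good S f →
    ∀ Γ' Δ', DerE (Γ.map (ren · f) + Γ') (Δ.map (ren · f) + Δ') := by
  induction h with
  | ax h =>
    refine ⟨∅, fun f g Γ' Δ' => ?_⟩
    simp only [Multiset.map_cons, Multiset.cons_add]
    exact .ax (isAtom_ren h f)
  | botL =>
    refine ⟨∅, fun f g Γ' Δ' => ?_⟩
    simp only [Multiset.map_cons, Multiset.cons_add]
    exact .botL
  | topR =>
    refine ⟨∅, fun f g Γ' Δ' => ?_⟩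
    simp only [Multiset.map_cons, Multiset.cons_add]
    exact .topR
  | andL _ ih =>
    obtain ⟨S, ih⟩ := ih
    refine ⟨S, fun f g Γ' Δ' => ?_⟩
    simp only [Multiset.map_cons, Multiset.cons_add] at ih ⊢
    exact .andL (ih f g _ _)
  | orR _ ih =>
    obtain ⟨S, ih⟩ := ih
    refine ⟨S, fun f g Γ' Δ' => ?_⟩
    simp only [Multiset.map_cons, Multiset.cons_add] at ih ⊢
    exact .orR (ih f g _ _)
  | impR _ ih =>
    obtain ⟨S, ih⟩ := ih
    refine ⟨S, fun f g Γ' Δ' => ?_⟩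
    simp only [Multiset.map_cons, Multiset.cons_add] at ih ⊢
    exact .impR (ih f g _ _)
  | andR _ _ ih1 ih2 =>
    obtain ⟨S, ih1⟩ := ih1
    obtain ⟨T, ih2⟩ := ih2
    refine ⟨S ∪ T, fun f g Γ' Δ' => ?_⟩
    simp only [Multiset.map_cons, Multiset.cons_add] at ih1 ih2 ⊢
    exact .andR (ih1 f (g.mono (by simp)) _ _) (ih2 f (g.mono (by simp)) _ _)
  | orL _ _ ih1 ih2 =>
    obtain ⟨S, ih1⟩ := ih1
    obtain ⟨T, ih2⟩ := ih2
    refine ⟨S ∪ T, fun f g Γ' Δ' => ?_⟩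
    simp only [Multiset.map_cons, Multiset.cons_add] at ih1 ih2 ⊢
    exact .orL (ih1 f (g.mono (by simp)) _ _) (ih2 f (g.mono (by simp)) _ _)
  | impL _ _ ih1 ih2 =>
    obtain ⟨S, ih1⟩ := ih1
    obtain ⟨T, ih2⟩ := ih2
    refine ⟨S ∪ T, fun f g Γ' Δ' => ?_⟩
    simp only [Multiset.map_cons, Multiset.cons_add] at ih1 ih2 ⊢
    exact .impL (ih1 f (g.mono (by simp)) _ _) (ih2 f (g.mono (by simp)) _ _)
  | @allL x A t Γ Δ hf _ ih =>
    obtain ⟨S, ih⟩ := ih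
    refine ⟨S ∪ insert x (bv A), fun f g Γ' Δ' => ?_⟩
    have g2 : good (insert x (bv A)) f := g.mono Finset.subset_union_right
    have := ih f (g.mono Finset.subset_union_left) Γ' Δ'
    simp only [Multiset.map_cons, Multiset.cons_add, inst_ren g2 hf] at this ⊢
    exact .allL (inst_free g2 hf) this
  | @exR x A t Γ Δ hf _ ih =>
    obtain ⟨S, ih⟩ := ih
    refine ⟨S ∪ insert x (bv A), fun f g Γ' Δ' => ?_⟩
    have g2 : good (insert x (bv A)) f := g.mono Finset.subset_union_right
    have := ih f (g.mono Finset.subset_union_left) Γ' Δ'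
    simp only [Multiset.map_cons, Multiset.cons_add, inst_ren g2 hf] at this ⊢
    exact .exR (inst_free g2 hf) this
  | @allR x y A Γ Δ hf hy _ ih =>
    obtain ⟨S, ih⟩ := ih
    refine ⟨S ∪ insert x (bv A), fun f g Γ' Δ' => ?_⟩
    have g2 : good (insert x (bv A)) f := g.mono Finset.subset_union_right
    obtain ⟨z, hz1, hz2⟩ := exists_fresh (S ∪ insert x (bv A))
      (terM (Γ.map (ren · f) + Γ') ∪ terM (Δ.map (ren · f) + Δ') ∪ (ren (Fm.all x A) f).ter)
    simp only [Finset.mem_union, not_or] at hz1 hy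
    have := ih (upd f (.var y) (.var z)) (good_fresh (g.mono Finset.subset_union_left) _ _ hz1.1) Γ' Δ'
    simp only [Multiset.map_cons, Multiset.cons_add] at this ⊢
    rw [upd_fresh_map hy.1.1, upd_fresh_map hy.1.2, eigen_ren g2 hz1.2 hy.2 hf] at this
    exact .allR (freeFor_bv _ _ _ (by
      intro w e; cases e; rw [bv_ren]; exact fun h => hz1.2 (by simp [h]))) hz2 this
  | @exL x y A Γ Δ hf hy _ ih =>
    obtain ⟨S, ih⟩ := ih
    refine ⟨S ∪ insert x (bv A), fun f g Γ' Δ' => ?_⟩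
    have g2 : good (insert x (bv A)) f := g.mono Finset.subset_union_right
    obtain ⟨z, hz1, hz2⟩ := exists_fresh (S ∪ insert x (bv A))
      (terM (Γ.map (ren · f) + Γ') ∪ terM (Δ.map (ren · f) + Δ') ∪ (ren (Fm.ex x A) f).ter)
    simp only [Finset.mem_union, not_or] at hz1 hy
    have := ih (upd f (.var y) (.var z)) (good_fresh (g.mono Finset.subset_union_left) _ _ hz1.1) Γ' Δ'
    simp only [Multiset.map_cons, Multiset.cons_add] at this ⊢
    rw [upd_fresh_map hy.1.1, upd_fresh_map hy.1.2, eigen_ren g2 hz1.2 hy.2 hf] at this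
    exact .exL (freeFor_bv _ _ _ (by
      intro w e; cases e; rw [bv_ren]; exact fun h => hz1.2 (by simp [h]))) hz2 this
  | @refl s Γ Δ _ ih =>
    obtain ⟨S, ih⟩ := ih
    refine ⟨S, fun f g Γ' Δ' => ?_⟩
    have := ih f g Γ' Δ'
    simp only [Multiset.map_cons, Multiset.cons_add, ren] at this ⊢
    exact .refl this
  | @repl P x s t Γ Δ hP _ ih =>
    obtain ⟨S, ih⟩ := ih
    refine ⟨S, fun f g Γ' Δ' => ?_⟩
    have := ih f g Γ' Δ'
    obtain ⟨z, -, hz⟩ := exists_fresh ∅ (P.ter.image f)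
    have key : ∀ s, ren (P.subst (.var x) s) f =
        (ren P (upd f (.var x) (.var z))).subst (.var z) (f s) := by
      intro s
      rw [subst_eq, subst_eq, ren_ren _ _ _ (ok_atom hP _), ren_ren _ _ _ (ok_atom hP _)]
      apply ren_congr
      intro u hu
      by_cases hx : u = .var x
      · subst hx; simp [upd]
      · have : f u ≠ .var z := fun e => hz (by simp; exact ⟨u, hu, e⟩)
        simp [upd, hx, this]
    simp only [Multiset.map_cons, Multiset.cons_add, key] at this ⊢
    exact .repl (isAtom_ren hP _) this

theorem map_ren_id (Γ : Multiset Fm) : Γ.map (ren · id) = Γ := by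
  simp [ren_id]

theorem weak {Γ Δ : Multiset Fm} (h : DerE Γ Δ) (Γ' Δ') : DerE (Γ + Γ') (Δ + Δ') := by
  obtain ⟨S, h⟩ := struct h
  simpa [ren_id] using h id (good_id _) Γ' Δ'

theorem weakL {Γ Δ : Multiset Fm} (h : DerE Γ Δ) (A) : DerE (A ::ₘ Γ) Δ := by
  simpa [← Multiset.singleton_add, add_comm] using weak h {A} 0

theorem weakR {Γ Δ : Multiset Fm} (h : DerE Γ Δ) (A) : DerE Γ (A ::ₘ Δ) := by
  simpa [← Multiset.singleton_add, add_comm] using weak h 0 {A}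

theorem swapL {A B} {Γ Δ : Multiset Fm} (h : DerE (A ::ₘ B ::ₘ Γ) Δ) : DerE (B ::ₘ A ::ₘ Γ) Δ := by
  rwa [Multiset.cons_swap]

theorem swapR {A B} {Γ Δ : Multiset Fm} (h : DerE Γ (A ::ₘ B ::ₘ Δ)) : DerE Γ (B ::ₘ A ::ₘ Δ) := by
  rwa [Multiset.cons_swap]

/-- D[z/t] -/
abbrev ab (D : Fm) (t : Tm) (z : ℕ) : Fm := ren D (upd id t (.var z))

theorem ab_ok {D : Fm} {t : Tm} {z : ℕ} (hz : z ∉ bv D) : ok D (upd id t (.var z)) :=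
  ok_good _ _ (good_fresh (good_id _) _ _ hz)

theorem ab_self (D : Fm) (t : Tm) (z : ℕ) : (ab D t z).subst (.var z) (.var z) = ab D t z := by
  rw [subst_eq, upd_id, ren_id]

theorem ab_back {D : Fm} {t : Tm} {z : ℕ} (hz : z ∉ bv D) (hz' : Tm.var z ∉ D.ter) :
    (ab D t z).subst (.var z) t = D := by
  rw [subst_eq, ren_ren _ _ _ (ab_ok hz)]
  conv_rhs => rw [← ren_id D]
  apply ren_congr
  intro u hu
  by_cases h : u = t
  · subst h; simp [upd]
  · have : u ≠ .var z := by rintro rfl; exact hz' hu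
    simp [upd, h, this]

theorem ab_ter {D : Fm} {t : Tm} {z : ℕ} : ∀ u ∈ (ab D t z).ter, u ≠ .var z → u ∈ D.ter ∧ u ≠ t := by
  intro u hu hz
  obtain ⟨v, hv, e⟩ := ter_ren _ _ _ hu
  by_cases h : v = t
  · subst h; simp [upd] at e; exact absurd e.symm hz
  · simp [upd, h] at e; subst e; exact ⟨hv, h⟩

theorem closeAll {S : Finset ℕ} {Γ₁ Γ₂ Δ₁ Δ₂ : Multiset Fm} {D : Fm} {t : Tm}
    (h1 : DerE Γ₁ (D ::ₘ Δ₁)) (h2 : DerE (D ::ₘ Γ₂) Δ₂)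
    (hS : ∀ x ∈ S, x ∉ bv D) (ht : ∀ x, t = .var x → x ∉ bv D)
    (hf : t ∉ terM Γ₁ ∧ t ∉ terM Δ₁) :
    ∃ C, DerE Γ₁ (C ::ₘ Δ₁) ∧ DerE (C ::ₘ Γ₂) Δ₂ ∧ (∀ x ∈ S, x ∉ bv C) ∧
      (∀ u ∈ C.ter, u ∈ D.ter ∧ u ≠ t) ∧ C.rels = D.rels := by
  obtain ⟨T, hT⟩ := struct h1
  obtain ⟨z, hz, hz'⟩ := exists_fresh (S ∪ T ∪ bv D) (terM Γ₁ ∪ terM Δ₁ ∪ D.ter)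
  simp only [Finset.mem_union, not_or] at hz hz'
  refine ⟨.all z (ab D t z), ?_, ?_, ?_, ?_, ?_⟩
  · have := hT (upd id t (.var z)) (good_fresh (good_id _) _ _ hz.1.2) 0 0
    simp only [Multiset.map_cons, add_zero] at this
    rw [upd_fresh_map hf.1, upd_fresh_map hf.2, map_ren_id, map_ren_id] at this
    refine .allR (y := z) (freeFor_bv _ _ _ ?_) ?_ ?_
    · intro x e; cases e; rw [bv_ren]; exact hz.2
    · simp [hz', Fm.ter]
    · rw [ab_self]; exact this
  · refine .allL (t := t) (freeFor_bv _ _ _ ?_) ?_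
    · intro x e; rw [bv_ren]; exact ht x e
    · rw [ab_back hz.2 hz'.2]
      exact swapL (weakL h2 _)
  · intro x hx
    simp only [bv, bv_ren, Finset.mem_insert, not_or]
    exact ⟨by rintro rfl; exact hz.1.1 hx, hS x hx⟩
  · intro u hu
    simp only [Fm.ter, Finset.mem_erase] at hu
    exact ab_ter u hu.2 hu.1
  · simp [Fm.rels, rels_ren]

theorem closeEx {S : Finset ℕ} {Γ₁ Γ₂ Δ₁ Δ₂ : Multiset Fm} {D : Fm} {t : Tm}
    (h1 : DerE Γ₁ (D ::ₘ Δ₁)) (h2 : DerE (D ::ₘ Γ₂) Δ₂)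
    (hS : ∀ x ∈ S, x ∉ bv D) (ht : ∀ x, t = .var x → x ∉ bv D)
    (hf : t ∉ terM Γ₂ ∧ t ∉ terM Δ₂) :
    ∃ C, DerE Γ₁ (C ::ₘ Δ₁) ∧ DerE (C ::ₘ Γ₂) Δ₂ ∧ (∀ x ∈ S, x ∉ bv C) ∧
      (∀ u ∈ C.ter, u ∈ D.ter ∧ u ≠ t) ∧ C.rels = D.rels := by
  obtain ⟨T, hT⟩ := struct h2
  obtain ⟨z, hz, hz'⟩ := exists_fresh (S ∪ T ∪ bv D) (terM Γ₂ ∪ terM Δ₂ ∪ D.ter)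
  simp only [Finset.mem_union, not_or] at hz hz'
  refine ⟨.ex z (ab D t z), ?_, ?_, ?_, ?_, ?_⟩
  · refine .exR (t := t) (freeFor_bv _ _ _ ?_) ?_
    · intro x e; rw [bv_ren]; exact ht x e
    · rw [ab_back hz.2 hz'.2]
      exact weakR h1 _
  · have := hT (upd id t (.var z)) (good_fresh (good_id _) _ _ hz.1.2) 0 0
    simp only [Multiset.map_cons, add_zero] at this
    rw [upd_fresh_map hf.1, upd_fresh_map hf.2, map_ren_id, map_ren_id] at this
    refine .exL (y := z) (freeFor_bv _ _ _ ?_) ?_ ?_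
    · intro x e; cases e; rw [bv_ren]; exact hz.2
    · simp [hz', Fm.ter]
    · rw [ab_self]; exact this
  · intro x hx
    simp only [bv, bv_ren, Finset.mem_insert, not_or]
    exact ⟨by rintro rfl; exact hz.1.1 hx, hS x hx⟩
  · intro u hu
    simp only [Fm.ter, Finset.mem_erase] at hu
    exact ab_ter u hu.2 hu.1
  · simp [Fm.rels, rels_ren]

def relsM (Γ : Multiset Fm) : Finset ℕ := (Γ.map Fm.rels).sup

theorem relsM_cons (A : Fm) (Γ : Multiset Fm) : relsM (A ::ₘ Γ) = A.rels ∪ relsM Γ := by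
  simp [relsM]

/-- interpolant avoiding S as bound variables -/
def Itp (S : Finset ℕ) (Γ₁ Γ₂ Δ₁ Δ₂ : Multiset Fm) (C : Fm) : Prop :=
  DerE Γ₁ (C ::ₘ Δ₁) ∧ DerE (C ::ₘ Γ₂) Δ₂ ∧ (∀ x ∈ S, x ∉ bv C) ∧
  (∀ u ∈ C.ter, u ∈ terM Γ₁ ∪ terM Δ₁) ∧ (∀ u ∈ C.ter, u ∈ terM Γ₂ ∪ terM Δ₂) ∧
  (∀ u ∈ C.rels, u ∈ relsM Γ₁ ∪ relsM Δ₁) ∧ (∀ u ∈ C.rels, u ∈ relsM Γ₂ ∪ relsM Δ₂)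

def vs : Tm → Finset ℕ
  | .var x => {x}
  | .const _ => ∅

theorem adjust {S : Finset ℕ} {Γ₁ Γ₂ Δ₁ Δ₂ : Multiset Fm} {D : Fm} (t : Tm)
    (h1 : DerE Γ₁ (D ::ₘ Δ₁)) (h2 : DerE (D ::ₘ Γ₂) Δ₂)
    (hS : ∀ x ∈ S ∪ vs t, x ∉ bv D)
    (t1 : ∀ u ∈ D.ter, u = t ∨ u ∈ terM Γ₁ ∪ terM Δ₁)
    (t2 : ∀ u ∈ D.ter, u = t ∨ u ∈ terM Γ₂ ∪ terM Δ₂)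
    (r1 : ∀ u ∈ D.rels, u ∈ relsM Γ₁ ∪ relsM Δ₁)
    (r2 : ∀ u ∈ D.rels, u ∈ relsM Γ₂ ∪ relsM Δ₂) :
    ∃ C, Itp S Γ₁ Γ₂ Δ₁ Δ₂ C := by
  have hS' : ∀ x ∈ S, x ∉ bv D := fun x hx => hS x (by simp [hx])
  have ht : ∀ x, t = .var x → x ∉ bv D := by rintro x rfl; exact hS x (by simp [vs])
  by_cases a : t ∈ terM Γ₁ ∪ terM Δ₁
  · by_cases b : t ∈ terM Γ₂ ∪ terM Δ₂
    · exact ⟨D, h1, h2, hS', by grind, by grind, r1, r2⟩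
    · obtain ⟨C, c1, c2, c3, c4, c5⟩ := closeEx h1 h2 hS' ht (by simpa using b)
      exact ⟨C, c1, c2, c3, by grind, by grind, by rwa [c5], by rwa [c5]⟩
  · obtain ⟨C, c1, c2, c3, c4, c5⟩ := closeAll h1 h2 hS' ht (by simpa using a)
    exact ⟨C, c1, c2, c3, by grind, by grind, by rwa [c5], by rwa [c5]⟩

theorem Itp.symm {S : Finset ℕ} {Γ₁ Γ₂ Δ₁ Δ₂ : Multiset Fm} (h : ∃ C, Itp S Γ₁ Γ₂ Δ₁ Δ₂ C) :
    ∃ C, Itp S Γ₂ Γ₁ Δ₂ Δ₁ C := by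
  obtain ⟨C, c1, c2, c3, c4, c5, c6, c7⟩ := h
  refine ⟨.imp C .bot, .impR (weakR c2 _), .impL c1 .botL, ?_, ?_, ?_, ?_, ?_⟩
  · simpa [bv] using c3
  all_goals simp only [Fm.ter, Fm.rels, Finset.union_empty]; assumption

theorem split_cons {A : Fm} {Γ Γ₁ Γ₂ : Multiset Fm} (h : A ::ₘ Γ = Γ₁ + Γ₂) :
    (∃ Γ', Γ₁ = A ::ₘ Γ' ∧ Γ = Γ' + Γ₂) ∨ (∃ Γ', Γ₂ = A ::ₘ Γ' ∧ Γ = Γ₁ + Γ') := by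
  have : A ∈ Γ₁ + Γ₂ := h ▸ Multiset.mem_cons_self A Γ
  rcases Multiset.mem_add.1 this with m | m <;> obtain ⟨Γ', rfl⟩ := Multiset.exists_cons_of_mem m
  · left; refine ⟨Γ', rfl, ?_⟩
    rw [Multiset.cons_add] at h; exact (Multiset.cons_inj_right A).1 h
  · right; refine ⟨Γ', rfl, ?_⟩
    rw [Multiset.add_cons] at h; exact (Multiset.cons_inj_right A).1 h

/-- contraction of atoms on the left -/
theorem contrAtom {P : Fm} (hP : P.isAtom) {Γ Δ : Multiset Fm} (h : DerE (P ::ₘ P ::ₘ Γ) Δ) :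
    DerE (P ::ₘ Γ) Δ := by
  obtain ⟨z, -, hz⟩ := exists_fresh ∅ P.ter
  have e : P.subst (.var z) (.var z) = P := by rw [subst_eq, upd_id, ren_id]
  apply DerE.refl (s := .var z)
  have := DerE.repl (P := P) (x := z) (s := .var z) (t := .var z) (Γ := Γ) (Δ := Δ) hP
  rw [e] at this
  exact this (swapL (weakL h _))

theorem ter_subst_le {A : Fm} {x : ℕ} {t : Tm} : ∀ u ∈ (A.subst (.var x) t).ter,
    u = t ∨ (u ∈ A.ter ∧ u ≠ .var x) := by
  intro u hu
  rw [subst_eq] at hu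
  obtain ⟨v, hv, e⟩ := ter_ren _ _ _ hu
  by_cases h : v = .var x
  · subst h; simp [upd] at e; exact .inl e.symm
  · simp [upd, h] at e; subst e; exact .inr ⟨hv, h⟩

theorem rels_subst {A : Fm} {x : ℕ} {t : Tm} : (A.subst (.var x) t).rels = A.rels := by
  rw [subst_eq, rels_ren]

theorem atom_ter_subst {P : Fm} (hP : P.isAtom) {x : ℕ} {s : Tm} :
    (∀ u ∈ P.ter, u ≠ .var x → u ∈ (P.subst (.var x) s).ter) ∧
    (.var x ∈ P.ter → s ∈ (P.subst (.var x) s).ter) := by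
  cases P <;> simp_all [Fm.isAtom, Fm.ter, Fm.subst, Tm.subst] <;> grind

end MI
namespace MI

theorem symL {A : Fm} {Γ Δ : Multiset Fm}
    (key : ∀ S Γ' Γ₂ Δ₁ Δ₂, Γ = Γ' + Γ₂ → Δ = Δ₁ + Δ₂ → ∃ C, Itp S (A ::ₘ Γ') Γ₂ Δ₁ Δ₂ C) :
    ∀ S Γ₁ Γ₂ Δ₁ Δ₂, A ::ₘ Γ = Γ₁ + Γ₂ → Δ = Δ₁ + Δ₂ → ∃ C, Itp S Γ₁ Γ₂ Δ₁ Δ₂ C := by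
  intro S Γ₁ Γ₂ Δ₁ Δ₂ e1 e2
  rcases split_cons e1 with ⟨Γ', rfl, e⟩ | ⟨Γ', rfl, e⟩
  · exact key S Γ' Γ₂ Δ₁ Δ₂ e e2
  · exact Itp.symm (key S Γ' Γ₁ Δ₂ Δ₁ (e.trans (add_comm _ _)) (e2.trans (add_comm _ _)))

theorem symR {A : Fm} {Γ Δ : Multiset Fm}
    (key : ∀ S Γ₁ Γ₂ Δ' Δ₂, Γ = Γ₁ + Γ₂ → Δ = Δ' + Δ₂ → ∃ C, Itp S Γ₁ Γ₂ (A ::ₘ Δ') Δ₂ C) :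
    ∀ S Γ₁ Γ₂ Δ₁ Δ₂, Γ = Γ₁ + Γ₂ → A ::ₘ Δ = Δ₁ + Δ₂ → ∃ C, Itp S Γ₁ Γ₂ Δ₁ Δ₂ C := by
  intro S Γ₁ Γ₂ Δ₁ Δ₂ e1 e2
  rcases split_cons e2 with ⟨Γ', rfl, e⟩ | ⟨Γ', rfl, e⟩
  · exact key S Γ₁ Γ₂ Γ' Δ₂ e1 e
  · exact Itp.symm (key S Γ₂ Γ₁ Γ' Δ₁ (e1.trans (add_comm _ _)) (e.trans (add_comm _ _)))

theorem bv_atom {P : Fm} (hP : P.isAtom) : bv P = ∅ := by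
  cases P <;> simp_all [Fm.isAtom, bv]

theorem rot3 {A B C} {Γ Δ : Multiset Fm} (h : DerE Γ (A ::ₘ B ::ₘ C ::ₘ Δ)) :
    DerE Γ (B ::ₘ C ::ₘ A ::ₘ Δ) := by
  rwa [Multiset.cons_swap C A, Multiset.cons_swap B A]

theorem rot3L {A B C} {Γ Δ : Multiset Fm} (h : DerE (A ::ₘ B ::ₘ C ::ₘ Γ) Δ) :
    DerE (B ::ₘ C ::ₘ A ::ₘ Γ) Δ := by
  rwa [Multiset.cons_swap C A, Multiset.cons_swap B A]

theorem main {Γ Δ : Multiset Fm} (h : DerE Γ Δ) : ∀ S Γ₁ Γ₂ Δ₁ Δ₂, Γ = Γ₁ + Γ₂ → Δ = Δ₁ + Δ₂ →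
    ∃ C, Itp S Γ₁ Γ₂ Δ₁ Δ₂ C := by
  induction h with
  | @ax P Γ Δ hP =>
    apply symL
    intro S Γ' Γ₂ Δ₁ Δ₂ e1 e2
    rcases split_cons e2 with ⟨Δ', rfl, e⟩ | ⟨Δ', rfl, e⟩
    · exact ⟨.bot, swapR (.ax hP), .botL, by simp [bv], by simp [Fm.ter], by simp [Fm.ter],
        by simp [Fm.rels], by simp [Fm.rels]⟩
    · refine ⟨P, .ax hP, .ax hP, by simp [bv_atom hP], ?_, ?_, ?_, ?_⟩ <;>
        simp only [terM_cons, relsM_cons, Finset.mem_union] <;> tauto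
  | botL =>
    apply symL
    intro S Γ' Γ₂ Δ₁ Δ₂ e1 e2
    exact ⟨.bot, .botL, .botL, by simp [bv], by simp [Fm.ter], by simp [Fm.ter],
        by simp [Fm.rels], by simp [Fm.rels]⟩
  | topR =>
    apply symR
    intro S Γ' Γ₂ Δ₁ Δ₂ e1 e2
    exact ⟨.bot, swapR .topR, .botL, by simp [bv], by simp [Fm.ter], by simp [Fm.ter],
        by simp [Fm.rels], by simp [Fm.rels]⟩
  | @andL A B Γ Δ _ ih =>
    apply symL
    intro S Γ' Γ₂ Δ₁ Δ₂ e1 e2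
    obtain ⟨C, c1, c2, c3, c4, c5, c6, c7⟩ := ih S (A ::ₘ B ::ₘ Γ') Γ₂ Δ₁ Δ₂ (by simp [e1]) e2
    simp only [terM_cons, relsM_cons] at c4 c6
    refine ⟨C, .andL c1, c2, c3, ?_, c5, ?_, c7⟩ <;>
      simp only [terM_cons, relsM_cons, Fm.ter, Fm.rels] <;> grind
  | @orR A B Γ Δ _ ih =>
    apply symR
    intro S Γ₁ Γ₂ Δ' Δ₂ e1 e2
    obtain ⟨C, c1, c2, c3, c4, c5, c6, c7⟩ := ih S Γ₁ Γ₂ (A ::ₘ B ::ₘ Δ') Δ₂ e1 (by simp [e2])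
    simp only [terM_cons, relsM_cons] at c4 c6
    refine ⟨C, swapR (.orR (rot3 c1)), c2, c3, ?_, c5, ?_, c7⟩ <;>
      simp only [terM_cons, relsM_cons, Fm.ter, Fm.rels] <;> grind
  | @impR A B Γ Δ _ ih =>
    apply symR
    intro S Γ₁ Γ₂ Δ' Δ₂ e1 e2
    obtain ⟨C, c1, c2, c3, c4, c5, c6, c7⟩ :=
      ih S (A ::ₘ Γ₁) Γ₂ (B ::ₘ Δ') Δ₂ (by simp [e1]) (by simp [e2])
    simp only [terM_cons, relsM_cons] at c4 c6
    refine ⟨C, swapR (.impR (swapR c1)), c2, c3, ?_, c5, ?_, c7⟩ <;>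
      simp only [terM_cons, relsM_cons, Fm.ter, Fm.rels] <;> grind
  | @andR A B Γ Δ _ _ ih1 ih2 =>
    apply symR
    intro S Γ₁ Γ₂ Δ' Δ₂ e1 e2
    obtain ⟨C, c1, c2, c3, c4, c5, c6, c7⟩ := ih1 S Γ₁ Γ₂ (A ::ₘ Δ') Δ₂ e1 (by simp [e2])
    obtain ⟨D, d1, d2, d3, d4, d5, d6, d7⟩ := ih2 S Γ₁ Γ₂ (B ::ₘ Δ') Δ₂ e1 (by simp [e2])
    simp only [terM_cons, relsM_cons] at c4 c6 d4 d6
    refine ⟨.or C D, .orR ?_, .orL c2 d2, ?_, ?_, ?_, ?_, ?_⟩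
    · apply rot3
      apply DerE.andR
      · exact swapR (rot3 (weakR c1 D))
      · exact rot3 (rot3 (weakR d1 C))
    all_goals
      simp only [terM_cons, relsM_cons, Fm.ter, Fm.rels, bv] <;> grind
  | @orL A B Γ Δ _ _ ih1 ih2 =>
    apply symL
    intro S Γ' Γ₂ Δ₁ Δ₂ e1 e2
    obtain ⟨C, c1, c2, c3, c4, c5, c6, c7⟩ := ih1 S (A ::ₘ Γ') Γ₂ Δ₁ Δ₂ (by simp [e1]) e2
    obtain ⟨D, d1, d2, d3, d4, d5, d6, d7⟩ := ih2 S (B ::ₘ Γ') Γ₂ Δ₁ Δ₂ (by simp [e1]) e2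
    simp only [terM_cons, relsM_cons] at c4 c6 d4 d6
    refine ⟨.or C D, .orR (.orL (swapR (weakR c1 D)) (weakR d1 C)), .orL c2 d2, ?_, ?_, ?_, ?_, ?_⟩
    all_goals
      simp only [terM_cons, relsM_cons, Fm.ter, Fm.rels, bv] <;> grind
  | @impL A B Γ Δ _ _ ih1 ih2 =>
    apply symL
    intro S Γ' Γ₂ Δ₁ Δ₂ e1 e2
    obtain ⟨C, c1, c2, c3, c4, c5, c6, c7⟩ := ih1 S Γ' Γ₂ (A ::ₘ Δ₁) Δ₂ e1 (by simp [e2])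
    obtain ⟨D, d1, d2, d3, d4, d5, d6, d7⟩ := ih2 S (B ::ₘ Γ') Γ₂ Δ₁ Δ₂ (by simp [e1]) e2
    simp only [terM_cons, relsM_cons] at c4 c6 d4 d6
    refine ⟨.or C D, .orR (.impL ?_ (weakR d1 C)), .orL c2 d2, ?_, ?_, ?_, ?_, ?_⟩
    · exact swapR (rot3 (weakR c1 D))
    all_goals
      simp only [terM_cons, relsM_cons, Fm.ter, Fm.rels, bv] <;> grind
  | @allL x A t Γ Δ hf _ ih =>
    apply symL
    intro S Γ' Γ₂ Δ₁ Δ₂ e1 e2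
    obtain ⟨C, c1, c2, c3, c4, c5, c6, c7⟩ :=
      ih (S ∪ vs t) (A.subst (.var x) t ::ₘ Fm.all x A ::ₘ Γ') Γ₂ Δ₁ Δ₂ (by simp [e1]) e2
    have hs := @ter_subst_le A x t
    simp only [terM_cons, relsM_cons, Fm.ter, Fm.rels, rels_subst] at c4 c6
    refine adjust t (.allL hf c1) c2 c3 ?_ ?_ ?_ ?_ <;>
      try simp only [terM_cons, relsM_cons, Fm.ter, Fm.rels]
    all_goals grind
  | @exR x A t Γ Δ hf _ ih =>
    apply symR
    intro S Γ₁ Γ₂ Δ' Δ₂ e1 e2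
    obtain ⟨C, c1, c2, c3, c4, c5, c6, c7⟩ :=
      ih (S ∪ vs t) Γ₁ Γ₂ (Fm.ex x A ::ₘ A.subst (.var x) t ::ₘ Δ') Δ₂ e1 (by simp [e2])
    have hs := @ter_subst_le A x t
    simp only [terM_cons, relsM_cons, Fm.ter, Fm.rels, rels_subst] at c4 c6
    refine adjust t (swapR (.exR hf (rot3 c1))) c2 c3 ?_ ?_ ?_ ?_ <;>
      try simp only [terM_cons, relsM_cons, Fm.ter, Fm.rels]
    all_goals grind
  | @allR x y A Γ Δ hf hy _ ih =>
    apply symR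
    intro S Γ₁ Γ₂ Δ' Δ₂ e1 e2
    obtain ⟨C, c1, c2, c3, c4, c5, c6, c7⟩ :=
      ih S Γ₁ Γ₂ (A.subst (.var x) (.var y) ::ₘ Δ') Δ₂ e1 (by simp [e2])
    have hs := @ter_subst_le A x (.var y)
    subst e1 e2
    simp only [terM_cons, relsM_cons, terM_add, Fm.ter, Fm.rels, rels_subst] at c4 c6 hy
    refine ⟨C, swapR (.allR hf ?_ (swapR c1)), c2, c3, ?_, c5, ?_, c7⟩ <;>
      simp only [terM_cons, relsM_cons, Fm.ter, Fm.rels] <;> grind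
  | @exL x y A Γ Δ hf hy _ ih =>
    apply symL
    intro S Γ' Γ₂ Δ₁ Δ₂ e1 e2
    obtain ⟨C, c1, c2, c3, c4, c5, c6, c7⟩ :=
      ih S (A.subst (.var x) (.var y) ::ₘ Γ') Γ₂ Δ₁ Δ₂ (by simp [e1]) e2
    have hs := @ter_subst_le A x (.var y)
    subst e1 e2
    simp only [terM_cons, relsM_cons, terM_add, Fm.ter, Fm.rels, rels_subst] at c4 c6 hy
    refine ⟨C, .exL hf ?_ c1, c2, c3, ?_, c5, ?_, c7⟩ <;>
      simp only [terM_cons, relsM_cons, Fm.ter, Fm.rels] <;> grind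
  | @refl s Γ Δ _ ih =>
    intro S Γ₁ Γ₂ Δ₁ Δ₂ e1 e2
    obtain ⟨C, c1, c2, c3, c4, c5, c6, c7⟩ :=
      ih (S ∪ vs s) (.eq s s ::ₘ Γ₁) Γ₂ Δ₁ Δ₂ (by simp [e1]) e2
    simp only [terM_cons, relsM_cons, Fm.ter, Fm.rels] at c4 c6
    refine adjust s (.refl c1) c2 c3 ?_ ?_ ?_ ?_ <;> grind
  | @repl P x s t Γ Δ hP _ ih =>
    have hs := @ter_subst_le P x t
    obtain ⟨ha, hb⟩ := @atom_ter_subst P hP x s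
    apply symL
    intro S Γ' Γ₂ Δ₁ Δ₂ e1 e2
    rcases split_cons e1 with ⟨Γ', rfl, e⟩ | ⟨Γ₂, rfl, e⟩
    · obtain ⟨C, c1, c2, c3, c4, c5, c6, c7⟩ := ih S
        (P.subst (.var x) t ::ₘ .eq s t ::ₘ P.subst (.var x) s ::ₘ Γ') Γ₂ Δ₁ Δ₂ (by simp [e]) e2
      simp only [terM_cons, relsM_cons, Fm.ter, Fm.rels, rels_subst] at c4 c6
      refine ⟨C, .repl hP c1, c2, c3, ?_, c5, ?_, c7⟩ <;>
        simp only [terM_cons, relsM_cons, Fm.ter, Fm.rels, rels_subst] <;> grind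
    · obtain ⟨C, c1, c2, c3, c4, c5, c6, c7⟩ := ih (S ∪ vs t)
        (.eq s t ::ₘ Γ') (P.subst (.var x) t ::ₘ P.subst (.var x) s ::ₘ Γ₂) Δ₁ Δ₂ (by
          rw [e]; simp only [← Multiset.singleton_add]; abel) e2
      by_cases hx : Tm.var x ∈ P.ter
      · simp only [terM_cons, relsM_cons, Fm.ter, Fm.rels, rels_subst] at c4 c5 c6 c7
        refine adjust (D := .and (.eq s t) C) t (.andR (.ax trivial) c1)
          (.andL ?_) ?_ ?_ ?_ ?_ ?_
        · have := DerE.repl (P := P) (x := x) (s := s) (t := t) (Γ := C ::ₘ Γ₂) (Δ := Δ₂) hP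
            (by
              have := weakL c2 (.eq s t)
              convert this using 1
              simp only [← Multiset.singleton_add]; abel)
          convert this using 1
          simp only [← Multiset.singleton_add]; abel
        all_goals
          simp only [terM_cons, relsM_cons, Fm.ter, Fm.rels, rels_subst, bv] <;> grind
      · have key : ∀ r, P.subst (.var x) r = P := by
          intro r
          rw [subst_eq]
          conv_rhs => rw [← ren_id P]
          apply ren_congr
          intro u hu
          have : u ≠ .var x := by rintro rfl; exact hx hu
          simp [upd, this]
        simp only [key] at *
        simp only [terM_cons, relsM_cons] at c5 c7
        refine ⟨C, c1, swapL (contrAtom hP (rot3L c2)), by grind, c4, ?_, c6, ?_⟩ <;>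
          simp only [terM_cons, relsM_cons] <;> grind

theorem mem_langM (Γ : Multiset Fm) :
    (∀ u, Sum.inl u ∈ langM Γ ↔ u ∈ terM Γ) ∧ (∀ u, Sum.inr u ∈ langM Γ ↔ u ∈ relsM Γ) := by
  induction Γ using Multiset.induction with
  | empty => simp [langM, terM, relsM]
  | cons a s ih =>
    simp only [langM, terM, relsM] at ih
    simp [langM, terM, relsM, ih, Fm.lang]

theorem relsM_add (Γ Δ : Multiset Fm) : relsM (Γ + Δ) = relsM Γ ∪ relsM Δ := by
  simp [relsM]

end MI

/-- Maehara's lemma for first-order logic with identity: in G=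
(G extended with Ref and Repl), every partition Γ₁;Γ₂⇒Δ₁;Δ₂ of a derivable
sequent has a split-interpolant. -/
theorem maehara_identity (Γ₁ Γ₂ Δ₁ Δ₂ : Multiset Fm)
    (hder : DerE (Γ₁ + Γ₂) (Δ₁ + Δ₂)) :
    ∃ C : Fm, SplitInterpolantE Γ₁ Γ₂ Δ₁ Δ₂ C := by
  obtain ⟨C, c1, c2, -, c4, c5, c6, c7⟩ := MI.main hder ∅ Γ₁ Γ₂ Δ₁ Δ₂ rfl rfl
  refine ⟨C, c1, c2, ?_⟩
  rintro (u | u) hu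
  · have hu' : u ∈ C.ter := by simpa [Fm.lang] using hu
    rw [Finset.mem_inter, (MI.mem_langM _).1, (MI.mem_langM _).1, MI.terM_add, MI.terM_add]
    exact ⟨c4 u hu', c5 u hu'⟩
  · have hu' : u ∈ C.rels := by simpa [Fm.lang] using hu
    rw [Finset.mem_inter, (MI.mem_langM _).2, (MI.mem_langM _).2, MI.relsM_add, MI.relsM_add]
    exact ⟨c6 u hu', c7 u hu'⟩
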